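/- Let p, k ∈ ℕ₀ and 0 < α < 2. Let g ∈ C_c^∞(ℝ²) with g(0) = 1 and ∂^l g(0) = 0 for all l ∈ ℕ₀² with 1 ≤ |l|₁ ≤ 2p+1, and let c(h) ∈ ℝ^{N_p} be the right-hand-side vector of the on-diagonal moment linear system with components c_i(h) = h^{−(2|ξ_i|₁+2−α)} ( ∫_{ℝ²} g(x) s(x) x^{2ξ_i} dx − T_h^0[g·s·x^{2ξ_i}] ), and let 𝔠(α) = lim_{h→0} c(h). Then c(h) admits an asymptotic expansion in even powers of h: there exist vectors C₀,…,C_k ∈ ℝ^{N_p} independent of h and a constant C > 0 such that for all sufficiently small h > 0, | c(h) − 𝔠(α) − h^{2p+2} Σ_{j=0}^{k} C_j h^{2j} | ≤ C h^{2p+4+2k}. -/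

import Mathlib

open MeasureTheory Real

noncomputable def euclNorm {n : ℕ} (x : Fin n → ℝ) : ℝ := Real.sqrt (∑ j, x j ^ 2)

noncomputable def pd {n : ℕ} (j : Fin n) (f : (Fin n → ℝ) → ℝ) : (Fin n → ℝ) → ℝ :=
  fun x => fderiv ℝ f x (Pi.single j 1)

noncomputable def md {n : ℕ} (γ : Fin n → ℕ) (f : (Fin n → ℝ) → ℝ) : (Fin n → ℝ) → ℝ :=
  (List.finRange n).foldr (fun j g => (pd j)^[γ j] g) f

noncomputable def trap {n : ℕ} (h : ℝ) (f : (Fin n → ℝ) → ℝ) : ℝ :=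
  h ^ n * ∑' β : {β : Fin n → ℤ // β ≠ 0}, f (fun j => (β.1 j : ℝ) * h)

noncomputable def sOn (α : ℝ) (x : Fin 2 → ℝ) : ℝ := x 0 ^ 2 / euclNorm x ^ ((2:ℝ) + α)

/-!
Scaling turns the components of `c(h)` into the quadrature error, on the unit lattice, of
`g (h • x)` times a homogeneous kernel `K`. Averaging over a unit cell replaces a function by its
translation differences, each of which trades one derivative for one power of decay; so the error of
a family of symbols is bounded uniformly in the family. Applied to dilated profiles, this shows that
a profile vanishing to order `N` at the origin contributes `O(h ^ N)`. For a cutoff, the difference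
of the errors at two scales only sees a profile vanishing near the origin, so the error converges
faster than any power of `h`. The Taylor term of `g` of degree `q`, absorbed into the kernel,
therefore contributes `h ^ q` times a constant, which is zero by parity for odd `q` and by
hypothesis for `1 ≤ q ≤ 2p + 1`.
-/

/-! ### The quadrature error of the unit lattice -/

section Quadrature

variable {n : ℕ} {u v : (Fin n → ℝ) → ℝ}

/-- The integer vector `β` as a point of `ℝⁿ`. -/
def latticePoint (β : Fin n → ℤ) : Fin n → ℝ := fun j => β j

lemma norm_latticePoint (β : Fin n → ℤ) : ‖latticePoint β‖ = ‖β‖ := by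
  simp only [latticePoint, Pi.norm_def]
  congr 2

@[simp] lemma latticePoint_zero : latticePoint (0 : Fin n → ℤ) = 0 := by
  ext j; simp [latticePoint]

@[simp] lemma latticePoint_neg (β : Fin n → ℤ) : latticePoint (-β) = -latticePoint β := by
  ext j; simp [latticePoint]

lemma finite_setOf_norm_latticePoint_lt (R : ℝ) :
    {β : Fin n → ℤ | ‖latticePoint β‖ < R}.Finite :=
  ((isCompact_closedBall (0 : Fin n → ℤ) R).finite_of_discrete).subset fun β hβ => by
    simpa [norm_latticePoint] using (show ‖latticePoint β‖ < R from hβ).le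

lemma one_le_norm_latticePoint {β : Fin n → ℤ} (hβ : β ≠ 0) : 1 ≤ ‖latticePoint β‖ := by
  obtain ⟨j, hj⟩ := Function.ne_iff.mp hβ
  calc (1 : ℝ) ≤ ‖β j‖ := by rw [Int.norm_eq_abs]; exact_mod_cast Int.one_le_abs hj
    _ ≤ ‖latticePoint β‖ := norm_latticePoint β ▸ norm_le_pi_norm β j

/-- The half-open unit cube whose lowest corner is `β`. -/
def unitCell (β : Fin n → ℤ) : Set (Fin n → ℝ) := {x | ∀ j, ⌊x j⌋ = β j}

lemma measurableSet_unitCell (β : Fin n → ℤ) : MeasurableSet (unitCell β) := by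
  have : unitCell β = ⋂ j, (fun x : Fin n → ℝ => ⌊x j⌋) ⁻¹' {β j} := by
    ext x; simp [unitCell]
  rw [this]
  exact MeasurableSet.iInter fun j =>
    (Int.measurable_floor.comp (measurable_pi_apply j)) (measurableSet_singleton _)

lemma pairwise_disjoint_unitCell :
    Pairwise (Function.onFun Disjoint (unitCell : (Fin n → ℤ) → Set (Fin n → ℝ))) :=
  fun _ _ hne => Set.disjoint_left.mpr fun _ hx hy =>
    hne (funext fun j => (hx j).symm.trans (hy j))

lemma iUnion_unitCell : ⋃ β : Fin n → ℤ, unitCell β = Set.univ :=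
  Set.eq_univ_of_forall fun x => Set.mem_iUnion.mpr ⟨fun j => ⌊x j⌋, fun _ => rfl⟩

lemma volume_unitCell_zero : volume (unitCell (0 : Fin n → ℤ)) = 1 := by
  have : unitCell (0 : Fin n → ℤ) = Set.pi Set.univ fun _ => Set.Ico (0 : ℝ) 1 := by
    ext x; simp [unitCell, Int.floor_eq_iff]
  rw [this, Real.volume_pi_Ico]
  simp

lemma norm_le_one_of_mem_unitCell_zero {y : Fin n → ℝ} (hy : y ∈ unitCell 0) : ‖y‖ ≤ 1 := by
  refine (pi_norm_le_iff_of_nonneg zero_le_one).mpr fun j => ?_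
  obtain ⟨h0, h1⟩ := Int.floor_eq_zero_iff.mp (hy j)
  exact abs_le.mpr ⟨by linarith, h1.le⟩

lemma setIntegral_unitCell (β : Fin n → ℤ) :
    ∫ x in unitCell β, u x = ∫ x in unitCell 0, u (x + latticePoint β) := by
  have hpre : (fun x : Fin n → ℝ => x + latticePoint β) ⁻¹' unitCell β = unitCell 0 := by
    ext x; simp [unitCell, latticePoint]
  rw [← hpre]
  exact ((measurePreserving_add_right volume (latticePoint β)).setIntegral_preimage_emb
    (MeasurableEquiv.addRight (latticePoint β)).measurableEmbedding u _).symm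

lemma setIntegral_const_unitCell_zero (c : ℝ) : ∫ _ in unitCell (0 : Fin n → ℤ), c = c := by
  simp [Measure.real, volume_unitCell_zero]

lemma integrableOn_const_unitCell_zero (c : ℝ) :
    IntegrableOn (fun _ => c) (unitCell (0 : Fin n → ℤ)) :=
  integrableOn_const (by simp [volume_unitCell_zero])

lemma hasSum_setIntegral_unitCell (hu : Integrable u) :
    HasSum (fun β => ∫ x in unitCell 0, u (x + latticePoint β)) (∫ x, u x) := by
  have := hasSum_integral_iUnion (μ := volume) (f := u) measurableSet_unitCell
    pairwise_disjoint_unitCell hu.integrableOn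
  rwa [iUnion_unitCell, Measure.restrict_univ, funext setIntegral_unitCell] at this

/-- Both terms of the quadrature error of `u` converge. -/
def LatticeIntegrable (u : (Fin n → ℝ) → ℝ) : Prop :=
  Integrable u ∧ Summable fun β => u (latticePoint β)

/-- The error of the trapezoidal rule of step one. -/
noncomputable def quadratureError (u : (Fin n → ℝ) → ℝ) : ℝ :=
  (∫ x, u x) - ∑' β : Fin n → ℤ, u (latticePoint β)

lemma quadratureError_add (hu : LatticeIntegrable u) (hv : LatticeIntegrable v) :
    quadratureError (fun x => u x + v x) = quadratureError u + quadratureError v := by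
  simp only [quadratureError]
  rw [integral_add hu.1 hv.1, hu.2.tsum_add hv.2]
  ring

lemma quadratureError_sum {ι : Type*} {s : Finset ι} {u : ι → (Fin n → ℝ) → ℝ}
    (hu : ∀ i ∈ s, LatticeIntegrable (u i)) :
    quadratureError (fun x => ∑ i ∈ s, u i x) = ∑ i ∈ s, quadratureError (u i) := by
  simp only [quadratureError]
  rw [integral_finsetSum s fun i hi => (hu i hi).1,
    Summable.tsum_finsetSum fun i hi => (hu i hi).2, Finset.sum_sub_distrib]

lemma quadratureError_const_mul (a : ℝ) :
    quadratureError (fun x => a * u x) = a * quadratureError u := by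
  simp only [quadratureError, integral_const_mul, tsum_mul_left, mul_sub]

lemma quadratureError_comp_neg : quadratureError (fun x => u (-x)) = quadratureError u := by
  simp only [quadratureError, ← latticePoint_neg]
  rw [integral_neg_eq_self u volume]
  exact congrArg _ ((Equiv.neg (Fin n → ℤ)).tsum_eq fun β => u (latticePoint β))

lemma quadratureError_eq_zero_of_odd (hu : Function.Odd u) : quadratureError u = 0 := by
  have := quadratureError_comp_neg (u := u)
  simp only [hu _, ← neg_one_mul (u _), quadratureError_const_mul] at this
  linarith

lemma quadratureError_translate_sub (hu : Integrable u) (y : Fin n → ℝ) :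
    quadratureError (fun x => u (x + y) - u x) =
      -∑' β, (u (y + latticePoint β) - u (latticePoint β)) := by
  rw [quadratureError, integral_sub (hu.comp_add_right y) hu, integral_add_right_eq_self, sub_self,
    zero_sub]
  simp only [add_comm y]

lemma quadratureError_eq_setIntegral (hu : LatticeIntegrable u) :
    quadratureError u =
      ∫ y in unitCell 0, ∑' β, (u (y + latticePoint β) - u (latticePoint β)) := by
  have hshift (β) : IntegrableOn (fun y => u (y + latticePoint β)) (unitCell 0) :=
    (hu.1.comp_add_right _).integrableOn
  have hconst (β) := integrableOn_const_unitCell_zero (n := n) (u (latticePoint β))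
  have hdiff (β) : IntegrableOn (fun y => u (y + latticePoint β) - u (latticePoint β))
      (unitCell 0) := (hshift β).sub (hconst β)
  have hsummable : Summable fun β : Fin n → ℤ =>
      ∫ y in unitCell 0, ‖u (y + latticePoint β) - u (latticePoint β)‖ := by
    refine Summable.of_nonneg_of_le (fun β => integral_nonneg fun _ => norm_nonneg _) (fun β => ?_)
      ((hasSum_setIntegral_unitCell hu.1.norm).summable.add hu.2.norm)
    rw [← setIntegral_const_unitCell_zero (n := n) ‖u (latticePoint β)‖,
      ← integral_add (hshift β).norm (hconst β).norm]
    exact integral_mono (hdiff β).norm ((hshift β).norm.add (hconst β).norm)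
      fun y => norm_sub_le _ _
  refine HasSum.unique ?_ (hasSum_integral_of_summable_integral_norm hdiff hsummable)
  have heq (β) : ∫ y in unitCell 0, (u (y + latticePoint β) - u (latticePoint β)) =
      (∫ y in unitCell 0, u (y + latticePoint β)) - u (latticePoint β) := by
    rw [integral_sub (hshift β) (hconst β), setIntegral_const_unitCell_zero]
  simp only [heq]
  exact (hasSum_setIntegral_unitCell hu.1).sub hu.2.hasSum

lemma abs_quadratureError_le_of_translate {B : ℝ} (hu : LatticeIntegrable u)
    (hB : ∀ y : Fin n → ℝ, ‖y‖ ≤ 1 → |quadratureError fun x => u (x + y) - u x| ≤ B) :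
    |quadratureError u| ≤ B := by
  rw [quadratureError_eq_setIntegral hu, ← Real.norm_eq_abs]
  have := norm_setIntegral_le_of_norm_le_const (μ := volume) (s := unitCell (0 : Fin n → ℤ))
    (C := B) (f := fun y => ∑' β, (u (y + latticePoint β) - u (latticePoint β)))
    (by simp [volume_unitCell_zero]) fun y hy => by
      have := hB y (norm_le_one_of_mem_unitCell_zero hy)
      rwa [quadratureError_translate_sub hu.1, abs_neg] at this
  simpa [Measure.real, volume_unitCell_zero] using this

lemma one_add_norm_rpow_neg_le {E : Type*} [NormedAddCommGroup E] {r : ℝ} (hr : 0 ≤ r) (x : E)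
    {y : E} (hy : ‖y‖ ≤ 1) :
    (1 + ‖x + y‖) ^ (-r) ≤ 2 ^ r * (1 + ‖x‖) ^ (-r) := by
  have hle : 1 + ‖x‖ ≤ 2 * (1 + ‖x + y‖) := by
    have : ‖x‖ ≤ ‖x + y‖ + ‖y‖ := by simpa using norm_sub_le (x + y) y
    linarith [norm_nonneg (x + y)]
  calc (1 + ‖x + y‖) ^ (-r) = 2 ^ r * (2 * (1 + ‖x + y‖)) ^ (-r) := by
        rw [mul_rpow zero_le_two (by positivity), ← mul_assoc, ← rpow_add zero_lt_two]
        simp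
    _ ≤ 2 ^ r * (1 + ‖x‖) ^ (-r) := by
        gcongr ?_ * ?_
        exact rpow_le_rpow_of_nonpos (by positivity) hle (by linarith)

lemma integrable_one_add_norm_rpow_neg {r : ℝ} (hr : n < r) :
    Integrable fun x : Fin n → ℝ => (1 + ‖x‖) ^ (-r) :=
  integrable_one_add_norm (by simpa using hr)

lemma summable_one_add_norm_latticePoint {r : ℝ} (hr : n < r) :
    Summable fun β : Fin n → ℤ => (1 + ‖latticePoint β‖) ^ (-r) := by
  have hr0 : 0 ≤ r := n.cast_nonneg.trans hr.le
  have hint := integrable_one_add_norm_rpow_neg hr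
  refine Summable.of_nonneg_of_le (fun β => by positivity) (fun β => ?_)
    ((hasSum_setIntegral_unitCell hint).summable.mul_left (2 ^ r))
  calc (1 + ‖latticePoint β‖) ^ (-r)
      = ∫ _ in unitCell (0 : Fin n → ℤ), (1 + ‖latticePoint β‖) ^ (-r) :=
        (setIntegral_const_unitCell_zero _).symm
    _ ≤ ∫ y in unitCell (0 : Fin n → ℤ), 2 ^ r * (1 + ‖y + latticePoint β‖) ^ (-r) := by
        refine setIntegral_mono_on (integrableOn_const_unitCell_zero _)
          ((hint.comp_add_right _).const_mul _).integrableOn (measurableSet_unitCell 0)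
          fun y hy => ?_
        simpa using one_add_norm_rpow_neg_le hr0 (y + latticePoint β) (y := -y)
          ((norm_neg y).trans_le (norm_le_one_of_mem_unitCell_zero hy))
    _ = 2 ^ r * ∫ y in unitCell (0 : Fin n → ℤ), (1 + ‖y + latticePoint β‖) ^ (-r) :=
        integral_const_mul _ _

lemma norm_iteratedFDeriv_translate_sub_le {E F : Type*} [NormedAddCommGroup E] [NormedSpace ℝ E]
    [NormedAddCommGroup F] [NormedSpace ℝ F] {f : E → F} {m : ℕ} (hf : ContDiff ℝ (m + 1 : ℕ) f)
    {r M : ℝ} (hr : 0 ≤ r)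
    (hM : ∀ x, ‖iteratedFDeriv ℝ (m + 1) f x‖ ≤ M * (1 + ‖x‖) ^ (-r)) {y : E} (hy : ‖y‖ ≤ 1)
    (x : E) :
    ‖iteratedFDeriv ℝ m (fun z => f (z + y) - f z) x‖ ≤ 2 ^ r * M * (1 + ‖x‖) ^ (-r) := by
  have hM0 : 0 ≤ M := nonneg_of_mul_nonneg_left ((norm_nonneg _).trans (hM 0)) (by positivity)
  have hfm : ContDiff ℝ m f := hf.of_le (by exact_mod_cast m.le_succ)
  have hsub : iteratedFDeriv ℝ m (fun z => f (z + y) - f z) x =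
      iteratedFDeriv ℝ m f (x + y) - iteratedFDeriv ℝ m f x := by
    rw [← iteratedFDeriv_comp_add_right]
    exact iteratedFDeriv_sub_apply (hfm.comp (contDiff_id.add contDiff_const)).contDiffAt
      hfm.contDiffAt
  have hderiv : ∀ z ∈ Metric.closedBall x 1,
      ‖fderiv ℝ (iteratedFDeriv ℝ m f) z‖ ≤ 2 ^ r * M * (1 + ‖x‖) ^ (-r) := fun z hz => by
    rw [norm_fderiv_iteratedFDeriv]
    calc ‖iteratedFDeriv ℝ (m + 1) f z‖ ≤ M * (1 + ‖x + (z - x)‖) ^ (-r) := by simpa using hM z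
      _ ≤ M * (2 ^ r * (1 + ‖x‖) ^ (-r)) := by
          gcongr; exact one_add_norm_rpow_neg_le hr x (mem_closedBall_iff_norm.mp hz)
      _ = 2 ^ r * M * (1 + ‖x‖) ^ (-r) := by ring
  have hmv := (convex_closedBall x 1).norm_image_sub_le_of_norm_fderiv_le (𝕜 := ℝ)
    (fun z _ => (hf.differentiable_iteratedFDeriv (by exact_mod_cast m.lt_succ_self)) z) hderiv
    (Metric.mem_closedBall_self zero_le_one) (y := x + y) (by simpa using hy)
  rw [hsub]
  refine hmv.trans (mul_le_of_le_one_right (by positivity) ?_)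
  simpa using hy

lemma exists_forall_norm_lt_of_hasCompactSupport {E F : Type*} [SeminormedAddCommGroup E]
    [Zero F] {f : E → F} (hc : HasCompactSupport f) : ∃ R : ℝ, ∀ x, f x ≠ 0 → ‖x‖ < R := by
  obtain ⟨R, hR⟩ := hc.isCompact.isBounded.subset_ball (0 : E)
  exact ⟨R, fun x hx => by simpa using hR (subset_tsupport f hx)⟩

lemma summable_latticePoint_of_hasCompactSupport (hc : HasCompactSupport u) :
    Summable fun β : Fin n → ℤ => u (latticePoint β) := by
  obtain ⟨R, hR⟩ := exists_forall_norm_lt_of_hasCompactSupport hc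
  exact summable_of_hasFiniteSupport
    ((finite_setOf_norm_latticePoint_lt R).subset fun β hβ => hR _ hβ)

lemma latticeIntegrable_of_hasCompactSupport (hu : Continuous u) (hc : HasCompactSupport u) :
    LatticeIntegrable u :=
  ⟨hu.integrable_of_hasCompactSupport hc, summable_latticePoint_of_hasCompactSupport hc⟩

lemma exists_abs_quadratureError_le_of_iteratedFDeriv {r : ℝ} (hr : n < r) (m : ℕ) :
    ∃ C, ∀ u : (Fin n → ℝ) → ℝ, ContDiff ℝ m u → HasCompactSupport u → ∀ M : ℝ,
      (∀ x, ‖iteratedFDeriv ℝ m u x‖ ≤ M * (1 + ‖x‖) ^ (-r)) → |quadratureError u| ≤ C * M := by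
  induction m with
  | zero =>
    refine ⟨(∫ x : Fin n → ℝ, (1 + ‖x‖) ^ (-r)) +
      ∑' β : Fin n → ℤ, (1 + ‖latticePoint β‖) ^ (-r), fun u _ _ M hM => ?_⟩
    have hM' (x) : ‖u x‖ ≤ M * (1 + ‖x‖) ^ (-r) := by simpa using hM x
    have hint := norm_integral_le_of_norm_le
      ((integrable_one_add_norm_rpow_neg hr).const_mul M) (.of_forall hM')
    have hsum := tsum_of_norm_bounded
      ((summable_one_add_norm_latticePoint hr).mul_left M).hasSum fun β => hM' (latticePoint β)
    rw [integral_const_mul] at hint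
    rw [tsum_mul_left] at hsum
    rw [quadratureError, ← Real.norm_eq_abs]
    linarith [norm_sub_le (∫ x, u x) (∑' β, u (latticePoint β))]
  | succ m ih =>
    obtain ⟨C, hC⟩ := ih
    have hr0 : 0 ≤ r := n.cast_nonneg.trans hr.le
    refine ⟨C * 2 ^ r, fun u hu hc M hM => ?_⟩
    refine abs_quadratureError_le_of_translate
      (latticeIntegrable_of_hasCompactSupport hu.continuous hc) fun y hy => ?_
    have hum : ContDiff ℝ m u := hu.of_le (by exact_mod_cast m.le_succ)
    rw [mul_assoc]
    exact hC _ ((hum.comp (contDiff_id.add contDiff_const)).sub hum)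
      ((hc.comp_homeomorph (Homeomorph.addRight y)).sub hc) _
      (norm_iteratedFDeriv_translate_sub_le hu hr0 hM hy)

end Quadrature

/-! ### Uniform symbol families -/

section Symbols

open Filter Topology
open scoped ContDiff

lemma exists_norm_le_one_add_norm_rpow {E F : Type*} [NormedAddCommGroup E] [NormedAddCommGroup F]
    {u : E → F} (hu : Continuous u) (hc : HasCompactSupport u) (e : ℝ) :
    ∃ C, 0 ≤ C ∧ ∀ x, ‖u x‖ ≤ C * (1 + ‖x‖) ^ e := by
  have hcont : Continuous fun x => (1 + ‖x‖) ^ (-e) :=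
    (continuous_const.add continuous_norm).rpow_const fun x : E =>
      .inl (show 1 + ‖x‖ ≠ 0 by positivity)
  obtain ⟨C, hC⟩ := (hu.norm.mul hcont).bounded_above_of_compact_support hc.norm.mul_right
  refine ⟨C, (norm_nonneg _).trans (hC 0), fun x => ?_⟩
  have : ‖u x‖ * (1 + ‖x‖) ^ (-e) ≤ C := (le_abs_self _).trans (hC x)
  rwa [rpow_neg (by positivity), ← div_eq_mul_inv, div_le_iff₀ (by positivity)] at this

variable {E : Type*} [NormedAddCommGroup E] [NormedSpace ℝ E]
variable {F : Type*} [NormedAddCommGroup F] [NormedSpace ℝ F]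
variable {ι κ : Type*} {m m' : ℝ} {S T : ι → E → ℝ}

/-- A family of symbols of order `m`, with constants independent of the index: each derivative
gains one power of decay. -/
structure IsUniformSymbol (m : ℝ) (S : ι → E → ℝ) : Prop where
  contDiff (i : ι) : ContDiff ℝ ∞ (S i)
  exists_bound (k : ℕ) : ∃ C, 0 ≤ C ∧
    ∀ i x, ‖iteratedFDeriv ℝ k (S i) x‖ ≤ C * (1 + ‖x‖) ^ (m - k)

namespace IsUniformSymbol

lemma reindex (hS : IsUniformSymbol m S) (e : κ → ι) : IsUniformSymbol m fun i => S (e i) where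
  contDiff i := hS.contDiff (e i)
  exists_bound k :=
    let ⟨C, hC0, hC⟩ := hS.exists_bound k
    ⟨C, hC0, fun i => hC (e i)⟩

lemma sub (hS : IsUniformSymbol m S) (hT : IsUniformSymbol m T) :
    IsUniformSymbol m fun i x => S i x - T i x where
  contDiff i := (hS.contDiff i).sub (hT.contDiff i)
  exists_bound k := by
    obtain ⟨A, hA0, hA⟩ := hS.exists_bound k
    obtain ⟨B, hB0, hB⟩ := hT.exists_bound k
    refine ⟨A + B, by positivity, fun i x => ?_⟩
    rw [fun_iteratedFDeriv_sub_apply (contDiff_infty.mp (hS.contDiff i) k).contDiffAt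
      (contDiff_infty.mp (hT.contDiff i) k).contDiffAt, add_mul]
    exact (norm_sub_le _ _).trans (add_le_add (hA i x) (hB i x))

lemma mul (hS : IsUniformSymbol m S) (hT : IsUniformSymbol m' T) :
    IsUniformSymbol (m + m') fun i x => S i x * T i x where
  contDiff i := (hS.contDiff i).mul (hT.contDiff i)
  exists_bound k := by
    choose A hA0 hA using hS.exists_bound
    choose B hB0 hB using hT.exists_bound
    refine ⟨∑ j ∈ Finset.range (k + 1), (k.choose j : ℝ) * A j * B (k - j), Finset.sum_nonneg
      fun j _ => mul_nonneg (mul_nonneg (by positivity) (hA0 j)) (hB0 _), fun i x => ?_⟩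
    refine (norm_iteratedFDeriv_mul_le (hS.contDiff i) (hT.contDiff i) x
      (by exact_mod_cast le_top)).trans ?_
    rw [Finset.sum_mul]
    refine Finset.sum_le_sum fun j hj => ?_
    have hjk : j ≤ k := by simpa [Nat.lt_succ_iff] using hj
    calc (k.choose j : ℝ) * ‖iteratedFDeriv ℝ j (S i) x‖ * ‖iteratedFDeriv ℝ (k - j) (T i) x‖
        ≤ (k.choose j : ℝ) * (A j * (1 + ‖x‖) ^ (m - j)) *
            (B (k - j) * (1 + ‖x‖) ^ (m' - (k - j : ℕ))) := by
          gcongr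
          · exact mul_nonneg (by positivity) (mul_nonneg (hA0 j) (by positivity))
          · exact hA j i x
          · exact hB (k - j) i x
      _ = (k.choose j : ℝ) * A j * B (k - j) * (1 + ‖x‖) ^ (m + m' - k) := by
          have : m + m' - k = (m - j) + (m' - (k - j : ℕ)) := by push_cast [hjk]; ring
          rw [this, rpow_add (by positivity)]
          ring

lemma pow_mul_of_vanishing (hS : IsUniformSymbol m S) {R : ι → ℝ} (hR : ∀ i, 0 ≤ R i)
    (hvanish : ∀ i x, ‖x‖ < R i → S i x = 0) (M : ℕ) :
    IsUniformSymbol (m + M) fun i x => R i ^ M * S i x where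
  contDiff i := contDiff_const.mul (hS.contDiff i)
  exists_bound k := by
    obtain ⟨C, hC0, hC⟩ := hS.exists_bound k
    refine ⟨C, hC0, fun i x => ?_⟩
    have hSk : ContDiffAt ℝ k (S i) x :=
      (contDiff_infty.mp (hS.contDiff i) k).contDiffAt
    rw [show (fun x => R i ^ M * S i x) = fun x => R i ^ M • S i x from rfl,
      iteratedFDeriv_const_smul_apply' hSk, norm_smul, norm_pow, norm_of_nonneg (hR i)]
    rcases lt_or_ge ‖x‖ (R i) with hx | hx
    · have hzero : S i =ᶠ[𝓝 x] fun _ => 0 :=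
        eventually_of_mem ((isOpen_lt continuous_norm continuous_const).mem_nhds hx)
          (hvanish i)
      rw [(hzero.iteratedFDeriv ℝ k).eq_of_nhds, iteratedFDeriv_fun_zero]
      simp only [Pi.zero_apply, norm_zero, mul_zero]
      positivity
    · calc R i ^ M * ‖iteratedFDeriv ℝ k (S i) x‖
          ≤ (1 + ‖x‖) ^ M * (C * (1 + ‖x‖) ^ (m - k)) := by
            gcongr
            · exact hR i
            · linarith
            · exact hC i x
        _ = C * (1 + ‖x‖) ^ (m + M - k) := by
            rw [show m + M - k = M + (m - k) by ring, rpow_add (by positivity), rpow_natCast]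
            ring

end IsUniformSymbol

lemma norm_iteratedFDeriv_le_norm_pow {f : E → F} {N : ℕ} (hf : ContDiff ℝ N f) {C : ℝ}
    (hC : ∀ x, ‖iteratedFDeriv ℝ N f x‖ ≤ C) (hvanish : ∀ k < N, iteratedFDeriv ℝ k f 0 = 0)
    (j : ℕ) : ∀ k, k + j = N → ∀ x, ‖iteratedFDeriv ℝ k f x‖ ≤ C * ‖x‖ ^ j := by
  have hC0 : 0 ≤ C := (norm_nonneg _).trans (hC 0)
  induction j with
  | zero => rintro k rfl x; simpa using hC x
  | succ j ih =>
    intro k hk x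
    have hderiv : ∀ z ∈ Metric.closedBall (0 : E) ‖x‖,
        ‖fderiv ℝ (iteratedFDeriv ℝ k f) z‖ ≤ C * ‖x‖ ^ j := fun z hz => by
      rw [norm_fderiv_iteratedFDeriv]
      refine (ih (k + 1) (by omega) z).trans ?_
      gcongr
      exact mem_closedBall_zero_iff.mp hz
    have := (convex_closedBall (0 : E) ‖x‖).norm_image_sub_le_of_norm_fderiv_le (𝕜 := ℝ)
      (fun z _ => (hf.differentiable_iteratedFDeriv (by exact_mod_cast (by omega : k < N))) z)
      hderiv (x := 0) (y := x) (by simp) (by simp)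
    simpa [hvanish k (by omega), pow_succ, mul_assoc] using this

section Dilation

variable {Ψ : E → ℝ} {N : ℕ}

lemma exists_norm_iteratedFDeriv_dilation_le (hΨ : ContDiff ℝ ∞ Ψ) (hc : HasCompactSupport Ψ)
    (hvanish : ∀ j < N, iteratedFDeriv ℝ j Ψ 0 = 0) (k : ℕ) :
    ∃ C, 0 ≤ C ∧ ∀ h : ℝ, 0 < h → h ≤ 1 → ∀ x,
      h ^ k * ‖iteratedFDeriv ℝ k Ψ (h • x)‖ ≤ h ^ N * (C * (1 + ‖x‖) ^ ((N : ℝ) - k)) := by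
  have hcont (j : ℕ) : Continuous (iteratedFDeriv ℝ j Ψ) :=
    hΨ.continuous_iteratedFDeriv (by exact_mod_cast le_top)
  rcases le_total k N with hkN | hNk
  · obtain ⟨C, hC⟩ := (hcont N).bounded_above_of_compact_support (hc.iteratedFDeriv N)
    have hC0 : 0 ≤ C := (norm_nonneg _).trans (hC 0)
    refine ⟨C, hC0, fun h h0 _ x => ?_⟩
    have := norm_iteratedFDeriv_le_norm_pow (contDiff_infty.mp hΨ N) hC hvanish
      (N - k) k (by omega) (h • x)
    calc h ^ k * ‖iteratedFDeriv ℝ k Ψ (h • x)‖ ≤ h ^ k * (C * (h * ‖x‖) ^ (N - k)) := by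
          rw [norm_smul, norm_of_nonneg h0.le] at this
          gcongr
      _ = h ^ N * (C * ‖x‖ ^ (N - k)) := by
          rw [mul_pow, ← pow_mul_pow_sub h hkN]
          ring
      _ ≤ h ^ N * (C * (1 + ‖x‖) ^ ((N : ℝ) - k)) := by
          rw [← Nat.cast_sub hkN, rpow_natCast]
          gcongr
          linarith
  · obtain ⟨C, hC0, hC⟩ := exists_norm_le_one_add_norm_rpow (hcont k) (hc.iteratedFDeriv k)
      ((N : ℝ) - k)
    refine ⟨C, hC0, fun h h0 h1 x => ?_⟩
    have hweight : h ^ (k - N) * (1 + ‖h • x‖) ^ ((N : ℝ) - k) ≤ (1 + ‖x‖) ^ ((N : ℝ) - k) := by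
      rw [← neg_sub, ← Nat.cast_sub hNk, rpow_neg (by positivity), rpow_neg (by positivity),
        rpow_natCast, rpow_natCast, ← div_eq_mul_inv, div_le_iff₀ (by positivity),
        inv_mul_eq_div, le_div_iff₀ (by positivity), ← mul_pow, norm_smul, norm_of_nonneg h0.le]
      gcongr
      linarith
    calc h ^ k * ‖iteratedFDeriv ℝ k Ψ (h • x)‖
        ≤ h ^ k * (C * (1 + ‖h • x‖) ^ ((N : ℝ) - k)) := by gcongr; exact hC _
      _ = h ^ N * (C * (h ^ (k - N) * (1 + ‖h • x‖) ^ ((N : ℝ) - k))) := by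
          rw [← pow_mul_pow_sub h hNk]
          ring
      _ ≤ h ^ N * (C * (1 + ‖x‖) ^ ((N : ℝ) - k)) := by gcongr

lemma isUniformSymbol_dilation (hΨ : ContDiff ℝ ∞ Ψ) (hc : HasCompactSupport Ψ)
    (hvanish : ∀ j < N, iteratedFDeriv ℝ j Ψ 0 = 0) :
    IsUniformSymbol N fun (h : Set.Ioc (0 : ℝ) 1) x => ((h : ℝ) ^ N)⁻¹ * Ψ ((h : ℝ) • x) where
  contDiff h := contDiff_const.mul (hΨ.comp (contDiff_const_smul (h : ℝ)))
  exists_bound k := by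
    obtain ⟨C, hC0, hC⟩ := exists_norm_iteratedFDeriv_dilation_le hΨ hc hvanish k
    have hΨk : ContDiff ℝ k Ψ := contDiff_infty.mp hΨ k
    refine ⟨C, hC0, fun ⟨h, h0, h1⟩ x => ?_⟩
    have hΨh : ContDiffAt ℝ k (fun x => Ψ (h • x)) x :=
      (hΨk.comp (contDiff_const_smul h)).contDiffAt
    rw [show (fun x => (h ^ N)⁻¹ * Ψ (h • x)) = fun x => (h ^ N)⁻¹ • Ψ (h • x) from rfl,
      iteratedFDeriv_const_smul_apply' hΨh,
      iteratedFDeriv_comp_const_smul h hΨk, norm_smul, norm_smul, norm_inv, norm_pow, norm_pow,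
      norm_of_nonneg h0.le, inv_mul_le_iff₀ (by positivity)]
    exact hC h h0 h1 x

end Dilation

section HomogeneousAtInfinity

lemma pow_smul_iteratedFDeriv_of_eventuallyEq {f : E → ℝ} {k : ℕ} {t c : ℝ} {y : E}
    (hf : ContDiff ℝ k f) (hscale : (fun z => f (t • z)) =ᶠ[𝓝 y] fun z => c * f z) :
    t ^ k • iteratedFDeriv ℝ k f (t • y) = c • iteratedFDeriv ℝ k f y := by
  rw [← iteratedFDeriv_const_smul_apply' (a := c) hf.contDiffAt]
  exact (congrFun (iteratedFDeriv_comp_const_smul t hf) y).symm.trans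
    (hscale.iteratedFDeriv ℝ k).eq_of_nhds

lemma norm_iteratedFDeriv_smul_of_eventuallyEq {f : E → ℝ} {k : ℕ} {t : ℝ} {y : E} (ht : 0 < t)
    (hf : ContDiff ℝ k f) (hscale : (fun z => f (t • z)) =ᶠ[𝓝 y] fun z => t ^ m * f z) :
    ‖iteratedFDeriv ℝ k f (t • y)‖ = t ^ (m - k) * ‖iteratedFDeriv ℝ k f y‖ := by
  have hnorm := congrArg norm (pow_smul_iteratedFDeriv_of_eventuallyEq hf hscale)
  rw [norm_smul, norm_smul, norm_of_nonneg (by positivity), norm_of_nonneg (by positivity)] at hnorm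
  rw [rpow_sub ht, rpow_natCast, div_mul_eq_mul_div, eq_div_iff (by positivity), ← hnorm, mul_comm]

lemma rpow_le_two_rpow_abs_mul_rpow {a b : ℝ} (ha : 0 < a) (hab : a ≤ b) (hba : b ≤ 2 * a)
    (e : ℝ) : a ^ e ≤ 2 ^ |e| * b ^ e := by
  have hb : 0 < b := ha.trans_le hab
  rcases le_total 0 e with he | he
  · have h1 : 1 ≤ (2 : ℝ) ^ |e| := one_le_rpow one_le_two (abs_nonneg e)
    exact (rpow_le_rpow ha.le hab he).trans (le_mul_of_one_le_left (by positivity) h1)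
  · calc a ^ e ≤ (b / 2) ^ e := rpow_le_rpow_of_nonpos (by positivity) (by linarith) he
      _ = 2 ^ |e| * b ^ e := by
        rw [div_rpow hb.le zero_le_two, abs_of_nonpos he, rpow_neg zero_le_two]
        field_simp

lemma isUniformSymbol_of_homogeneous_at_infinity [ProperSpace E] {f : E → ℝ} {ρ : ℝ}
    (hf : ContDiff ℝ ∞ f) (hρ : ρ < 1)
    (hhom : ∀ x, ρ ≤ ‖x‖ → ∀ t : ℝ, 1 ≤ t → f (t • x) = t ^ m * f x) :
    IsUniformSymbol m fun (_ : ι) => f where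
  contDiff _ := hf
  exists_bound k := by
    have hfk : ContDiff ℝ k f := contDiff_infty.mp hf k
    obtain ⟨C, hC⟩ := (isCompact_closedBall (0 : E) 1).exists_bound_of_continuousOn
      (hfk.continuous_iteratedFDeriv le_rfl).continuousOn
    have hC0 : 0 ≤ C := (norm_nonneg _).trans (hC 0 (by simp))
    refine ⟨C * 2 ^ |m - k|, by positivity, fun _ x => ?_⟩
    rw [mul_assoc]
    rcases le_total ‖x‖ 1 with hx | hx
    · refine (hC x (by simpa using hx)).trans (le_mul_of_one_le_right hC0 ?_)
      simpa using rpow_le_two_rpow_abs_mul_rpow one_pos (by linarith [norm_nonneg x])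
        (by linarith : 1 + ‖x‖ ≤ 2 * 1) (m - k)
    · obtain ⟨t, y, ht1, hy, rfl⟩ : ∃ (t : ℝ) (y : E), 1 ≤ t ∧ ‖y‖ = 1 ∧ t • y = x :=
        have hx0 : ‖x‖ ≠ 0 := (one_pos.trans_le hx).ne'
        ⟨‖x‖, ‖x‖⁻¹ • x, hx, by rw [norm_smul, norm_inv, norm_norm, inv_mul_cancel₀ hx0],
          smul_inv_smul₀ hx0 x⟩
      have ht : 0 < t := one_pos.trans_le ht1
      have hscale : (fun z => f (t • z)) =ᶠ[𝓝 y] fun z => t ^ m * f z := by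
        filter_upwards [(isOpen_lt continuous_const continuous_norm).mem_nhds (hρ.trans_eq hy.symm)]
          with z hz using hhom z (le_of_lt hz) t ht1
      rw [norm_iteratedFDeriv_smul_of_eventuallyEq ht hfk hscale, mul_comm C, norm_smul, hy,
        norm_of_nonneg ht.le, mul_one]
      gcongr
      · exact rpow_le_two_rpow_abs_mul_rpow ht (by linarith) (by linarith) _
      · exact hC y (by simp [hy])

end HomogeneousAtInfinity

end Symbols

/-! ### Homogeneous kernels -/

section Kernel

open Filter Topology
open scoped ContDiff

variable {n : ℕ} {ι : Type*} {d : ℝ}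

/-- A smooth cutoff equal to one near the origin and to zero at every other lattice point. -/
noncomputable def cutoff (n : ℕ) : ContDiffBump (0 : Fin n → ℝ) :=
  ⟨1 / 4, 1 / 2, by norm_num, by norm_num⟩

lemma cutoff_eq_one {x : Fin n → ℝ} (hx : ‖x‖ ≤ 1 / 4) : cutoff n x = 1 :=
  (cutoff n).one_of_mem_closedBall (by simpa [cutoff] using hx)

lemma cutoff_eq_zero {x : Fin n → ℝ} (hx : 1 / 2 ≤ ‖x‖) : cutoff n x = 0 :=
  (cutoff n).zero_of_le_dist (by simpa [cutoff] using hx)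

lemma norm_cutoff_le_one (x : Fin n → ℝ) : ‖cutoff n x‖ ≤ 1 := by
  rw [Real.norm_of_nonneg (cutoff n).nonneg]
  exact (cutoff n).le_one

/-- A kernel that is smooth off the origin and positively homogeneous of degree `d`. It takes the
value zero at the origin, so that sums over the punctured lattice are sums over the lattice. -/
structure IsHomogeneousKernel {E : Type*} [NormedAddCommGroup E] [NormedSpace ℝ E] (d : ℝ)
    (K : E → ℝ) : Prop where
  contDiffAt : ∀ x ≠ 0, ContDiffAt ℝ ∞ K x
  map_smul : ∀ t > 0, ∀ x, K (t • x) = t ^ d * K x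
  map_zero : K 0 = 0

namespace IsHomogeneousKernel

lemma mul_homogeneous {E : Type*} [NormedAddCommGroup E] [NormedSpace ℝ E] {K P : E → ℝ} {q : ℕ}
    (hK : IsHomogeneousKernel d K) (hP : ContDiff ℝ ∞ P)
    (hPhom : ∀ (t : ℝ) (x : E), P (t • x) = t ^ q * P x) :
    IsHomogeneousKernel (d + q) fun x => K x * P x where
  contDiffAt x hx := (hK.contDiffAt x hx).mul hP.contDiffAt
  map_smul t ht x := by
    rw [hK.map_smul t ht, hPhom, rpow_add ht, rpow_natCast]
    ring
  map_zero := by rw [hK.map_zero, zero_mul]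

lemma exists_norm_le {E : Type*} [NormedAddCommGroup E] [NormedSpace ℝ E] [ProperSpace E]
    {K : E → ℝ} (hK : IsHomogeneousKernel d K) :
    ∃ C, 0 ≤ C ∧ ∀ x, ‖K x‖ ≤ C * ‖x‖ ^ d := by
  obtain ⟨C, hC⟩ := (isCompact_sphere (0 : E) 1).exists_bound_of_continuousOn (f := K)
    fun x hx => (hK.contDiffAt x (ne_zero_of_mem_unit_sphere ⟨x, hx⟩)).continuousAt
      |>.continuousWithinAt
  refine ⟨max C 0, le_max_right _ _, fun x => ?_⟩
  rcases eq_or_ne x 0 with rfl | hx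
  · rw [hK.map_zero, norm_zero]
    positivity
  have hx0 : 0 < ‖x‖ := norm_pos_iff.mpr hx
  have hsphere : ‖K (‖x‖⁻¹ • x)‖ ≤ max C 0 :=
    (hC _ (by simp [norm_smul, hx0.ne'])).trans (le_max_left _ _)
  calc ‖K x‖ = ‖K (‖x‖ • ‖x‖⁻¹ • x)‖ := by rw [smul_inv_smul₀ hx0.ne']
    _ = ‖x‖ ^ d * ‖K (‖x‖⁻¹ • x)‖ := by
        rw [hK.map_smul _ hx0, norm_mul, norm_of_nonneg (rpow_nonneg hx0.le d)]
    _ ≤ max C 0 * ‖x‖ ^ d := by rw [mul_comm]; gcongr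

variable {K : (Fin n → ℝ) → ℝ}

lemma measurable (hK : IsHomogeneousKernel d K) : Measurable K :=
  measurable_of_continuousOn_compl_singleton 0 fun x hx =>
    (hK.contDiffAt x hx).continuousAt.continuousWithinAt

lemma integrableOn_ball (hK : IsHomogeneousKernel d K) (hd : -n < d) (R : ℝ) :
    IntegrableOn K (Metric.ball 0 R) := by
  rcases n.eq_zero_or_pos with rfl | hn
  · have : K = 0 := funext fun x => by rw [Subsingleton.elim x 0, hK.map_zero]; rfl
    exact this ▸ integrableOn_zero
  obtain ⟨C, -, hC⟩ := hK.exists_norm_le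
  exact integrableOn_ball_of_norm_le_rpow (C := C) (α := -d)
    (by simpa [Nat.one_le_iff_ne_zero] using hn.ne')
    (by simpa using by linarith) (.of_forall fun x => by simpa using hC x)
    hK.measurable.aestronglyMeasurable

lemma latticeIntegrable_mul (hK : IsHomogeneousKernel d K) (hd : -n < d)
    {ψ : (Fin n → ℝ) → ℝ} (hψ : Continuous ψ) (hc : HasCompactSupport ψ) :
    LatticeIntegrable fun x => ψ x * K x := by
  refine ⟨?_, summable_latticePoint_of_hasCompactSupport hc.mul_right⟩
  obtain ⟨R, hR⟩ := exists_forall_norm_lt_of_hasCompactSupport hc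
  obtain ⟨M, hM⟩ := hψ.bounded_above_of_compact_support hc
  rw [← integrableOn_iff_integrable_of_support_subset (s := Metric.ball 0 R)
    fun x hx => mem_ball_zero_iff.mpr (hR x (left_ne_zero_of_mul hx))]
  exact (hK.integrableOn_ball hd R).bdd_mul hψ.aestronglyMeasurable (.of_forall hM)

lemma isUniformSymbol_one_sub_cutoff_mul (hK : IsHomogeneousKernel d K) :
    IsUniformSymbol d fun (_ : ι) x => (1 - cutoff n x) * K x := by
  refine isUniformSymbol_of_homogeneous_at_infinity (ρ := 1 / 2)
    (contDiff_iff_contDiffAt.mpr fun x => ?_) (by norm_num) fun x hx t ht => ?_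
  · rcases eq_or_ne x 0 with rfl | hx
    · have hzero : (fun x => (1 - cutoff n x) * K x) =ᶠ[𝓝 0] fun _ => 0 := by
        filter_upwards [(cutoff n).eventuallyEq_one] with x hx
        simp [hx]
      exact contDiffAt_const.congr_of_eventuallyEq hzero
    · exact (contDiffAt_const.sub (cutoff n).contDiffAt).mul (hK.contDiffAt x hx)
  · have htx : 1 / 2 ≤ ‖t • x‖ := by
      rw [norm_smul, norm_of_nonneg (by linarith)]
      nlinarith
    rw [cutoff_eq_zero hx, cutoff_eq_zero htx, hK.map_smul t (by linarith)]
    ring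

lemma quadratureError_mul_cutoff_mul (hK : IsHomogeneousKernel d K) (ψ : (Fin n → ℝ) → ℝ) :
    quadratureError (fun x => ψ x * cutoff n x * K x) = ∫ x, ψ x * cutoff n x * K x := by
  have hlattice (β : Fin n → ℤ) :
      ψ (latticePoint β) * cutoff n (latticePoint β) * K (latticePoint β) = 0 := by
    rcases eq_or_ne β 0 with rfl | hβ
    · rw [latticePoint_zero, hK.map_zero, mul_zero]
    · rw [cutoff_eq_zero (by linarith [one_le_norm_latticePoint hβ]), mul_zero, zero_mul]
  simp [quadratureError, hlattice]

lemma norm_integral_mul_cutoff_mul_le (hK : IsHomogeneousKernel d K) (hd : -n < d)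
    {ψ : (Fin n → ℝ) → ℝ} {B : ℝ} (hB : ∀ x, ‖x‖ < 1 → ‖ψ x‖ ≤ B) :
    ‖∫ x, ψ x * cutoff n x * K x‖ ≤ ∫ x in Metric.ball 0 1, B * ‖K x‖ := by
  have hoff : ∀ x, x ∉ Metric.ball (0 : Fin n → ℝ) 1 → ψ x * cutoff n x * K x = 0 :=
    fun x hx => by
      have hx1 : 1 ≤ ‖x‖ := by simpa using hx
      rw [cutoff_eq_zero (by linarith), mul_zero, zero_mul]
  rw [← setIntegral_eq_integral_of_forall_compl_eq_zero hoff]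
  refine norm_integral_le_of_norm_le ((hK.integrableOn_ball hd 1).norm.const_mul B)
    ((ae_restrict_iff' measurableSet_ball).mpr (.of_forall fun x hx => ?_))
  rw [norm_mul, norm_mul]
  gcongr
  exact (mul_le_of_le_one_right (norm_nonneg _) (norm_cutoff_le_one x)).trans
    (hB x (mem_ball_zero_iff.mp hx))

end IsHomogeneousKernel

lemma IsUniformSymbol.exists_abs_quadratureError_le {m : ℝ} {S : ι → (Fin n → ℝ) → ℝ}
    (hS : IsUniformSymbol m S) (hc : ∀ i, HasCompactSupport (S i)) :
    ∃ C, ∀ i, |quadratureError (S i)| ≤ C := by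
  obtain ⟨k, hk⟩ := exists_nat_ge (m + (n + 1))
  obtain ⟨C, hC⟩ := exists_abs_quadratureError_le_of_iteratedFDeriv (lt_add_one (n : ℝ)) k
  obtain ⟨M, hM0, hM⟩ := hS.exists_bound k
  refine ⟨C * M, fun i => hC (S i) (contDiff_infty.mp (hS.contDiff i) k) (hc i) M
    fun x => (hM i x).trans ?_⟩
  gcongr
  · linarith [norm_nonneg x]
  · linarith

lemma IsUniformSymbol.exists_norm_le_of_norm_lt_one {E : Type*} [NormedAddCommGroup E]
    [NormedSpace ℝ E] {m : ℝ} {S : ι → E → ℝ} (hS : IsUniformSymbol m S) :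
    ∃ B, ∀ i x, ‖x‖ < 1 → ‖S i x‖ ≤ B := by
  obtain ⟨C, hC0, hC⟩ := hS.exists_bound 0
  refine ⟨C * 2 ^ |m|, fun i x hx => ?_⟩
  have h1 : 1 ≤ 1 + ‖x‖ := by linarith [norm_nonneg x]
  calc ‖S i x‖ ≤ C * (1 + ‖x‖) ^ m := by simpa using hC i x
    _ ≤ C * (1 + ‖x‖) ^ |m| := by gcongr; exact le_abs_self m
    _ ≤ C * 2 ^ |m| := by gcongr; linarith

theorem IsHomogeneousKernel.exists_abs_quadratureError_mul_le {m : ℝ} {K : (Fin n → ℝ) → ℝ}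
    {S : ι → (Fin n → ℝ) → ℝ} (hK : IsHomogeneousKernel d K) (hd : -n < d)
    (hS : IsUniformSymbol m S) (hc : ∀ i, HasCompactSupport (S i)) :
    ∃ C, ∀ i, |quadratureError fun x => S i x * K x| ≤ C := by
  obtain ⟨A, hA⟩ := (hS.mul hK.isUniformSymbol_one_sub_cutoff_mul).exists_abs_quadratureError_le
    fun i => (hc i).mul_right
  obtain ⟨B, hB⟩ := hS.exists_norm_le_of_norm_lt_one
  refine ⟨A + ∫ x in Metric.ball 0 1, B * ‖K x‖, fun i => ?_⟩
  have hfar : LatticeIntegrable fun x => S i x * ((1 - cutoff n x) * K x) :=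
    latticeIntegrable_of_hasCompactSupport ((hS.contDiff i).mul
      ((hK.isUniformSymbol_one_sub_cutoff_mul (ι := ι)).contDiff i)).continuous (hc i).mul_right
  have hnear : LatticeIntegrable fun x => S i x * cutoff n x * K x :=
    hK.latticeIntegrable_mul hd ((hS.contDiff i).continuous.mul (cutoff n).continuous)
      (hc i).mul_right
  have hsplit : (fun x => S i x * K x) =
      fun x => S i x * ((1 - cutoff n x) * K x) + S i x * cutoff n x * K x := by
    funext x; ring
  rw [hsplit, quadratureError_add hfar hnear]
  refine (abs_add_le _ _).trans (add_le_add (hA i) ?_)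
  rw [hK.quadratureError_mul_cutoff_mul, ← Real.norm_eq_abs]
  exact hK.norm_integral_mul_cutoff_mul_le hd (hB i)

end Kernel

/-! ### The scaled error -/

section ScaledError

open Filter Topology
open scoped ContDiff

variable {n N : ℕ} {d : ℝ} {K φ Ψ : (Fin n → ℝ) → ℝ}

/-- The error of the unit lattice on the kernel `K` localised by the profile `φ` at scale `h⁻¹`.
For `K` homogeneous this is, up to a power of `h`, the error of the lattice of step `h` on `φ * K`,
and it makes sense with no puncture when `K` vanishes at the origin. -/
noncomputable def scaledError (K φ : (Fin n → ℝ) → ℝ) (h : ℝ) : ℝ :=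
  quadratureError fun x => φ (h • x) * K x

namespace IsHomogeneousKernel

lemma exists_abs_scaledError_le_of_vanishing (hK : IsHomogeneousKernel d K) (hd : -n < d)
    (hΨ : ContDiff ℝ ∞ Ψ) (hc : HasCompactSupport Ψ)
    (hvanish : ∀ j < N, iteratedFDeriv ℝ j Ψ 0 = 0) :
    ∃ C, ∀ h ∈ Set.Ioc (0 : ℝ) 1, |scaledError K Ψ h| ≤ C * h ^ N := by
  obtain ⟨C, hC⟩ := hK.exists_abs_quadratureError_mul_le hd
    (isUniformSymbol_dilation hΨ hc hvanish) fun h => (hc.comp_smul h.2.1.ne').mul_left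
  refine ⟨C, fun h hh => ?_⟩
  have hN : 0 < h ^ N := pow_pos hh.1 N
  have := hC ⟨h, hh⟩
  simp only [mul_assoc, quadratureError_const_mul] at this
  rwa [abs_mul, abs_of_pos (inv_pos.mpr hN), inv_mul_le_iff₀ hN, mul_comm] at this

lemma latticeIntegrable_comp_smul_mul (hK : IsHomogeneousKernel d K) (hd : -n < d)
    (hφ : Continuous φ) (hc : HasCompactSupport φ) {h : ℝ} (hh : h ≠ 0) :
    LatticeIntegrable fun x => φ (h • x) * K x :=
  hK.latticeIntegrable_mul hd (hφ.comp (continuous_const_smul h)) (hc.comp_smul hh)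

lemma quadratureError_cutoff_sub_mul (hK : IsHomogeneousKernel d K) (hd : -n < d) {s t : ℝ}
    (hs : s ≠ 0) (ht : t ≠ 0) :
    quadratureError (fun x => (cutoff n (t • x) - cutoff n (s • x)) * K x) =
      scaledError K (cutoff n) t - scaledError K (cutoff n) s := by
  have hint {h : ℝ} (hh : h ≠ 0) :=
    hK.latticeIntegrable_comp_smul_mul hd (cutoff n).continuous (cutoff n).hasCompactSupport hh
  rw [eq_sub_iff_add_eq, scaledError, scaledError, ← quadratureError_add _ (hint hs)]
  · simp only [sub_mul, sub_add_cancel]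
  · simp only [sub_mul]
    exact ⟨(hint ht).1.sub (hint hs).1, (hint ht).2.sub (hint hs).2⟩

-- The profile `cutoff (t • x) - cutoff (s • x)` vanishes for `‖x‖ < 1 / (4 * t)`, so it is a
-- symbol of any order `M` up to a factor `(4 * t) ^ M`.
lemma exists_abs_scaledError_cutoff_sub_le (hK : IsHomogeneousKernel d K) (hd : -n < d) (M : ℕ) :
    ∃ C, ∀ s t : ℝ, 0 < s → s ≤ t → t ≤ 1 →
      |scaledError K (cutoff n) t - scaledError K (cutoff n) s| ≤ C * t ^ M := by
  let ι := {p : Set.Ioc (0 : ℝ) 1 × Set.Ioc (0 : ℝ) 1 // p.1 ≤ p.2}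
  have hdil := isUniformSymbol_dilation (N := 0) (cutoff n).contDiff (cutoff n).hasCompactSupport
    (by simp)
  simp only [pow_zero, inv_one, one_mul] at hdil
  have hsmul {a b : ℝ} {x : Fin n → ℝ} (ha : 0 < a) (hab : a ≤ b) (hx : ‖x‖ < 1 / (4 * b)) :
      ‖a • x‖ ≤ 1 / 4 := by
    rw [lt_div_iff₀ (by linarith)] at hx
    rw [norm_smul, norm_of_nonneg ha.le]
    nlinarith [norm_nonneg x]
  obtain ⟨C, hC⟩ := hK.exists_abs_quadratureError_mul_le hd
    (((hdil.reindex fun i : ι => i.1.2).sub (hdil.reindex fun i : ι => i.1.1)).pow_mul_of_vanishing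
      (R := fun i => 1 / (4 * (i.1.2 : ℝ))) (fun i => by have := i.1.2.2.1; positivity)
      (fun i x hx => by
        rw [cutoff_eq_one (hsmul i.1.2.2.1 le_rfl hx), cutoff_eq_one (hsmul i.1.1.2.1 i.2 hx),
          sub_self]) M)
    fun i => (((cutoff n).hasCompactSupport.comp_smul i.1.2.2.1.ne').sub
      ((cutoff n).hasCompactSupport.comp_smul i.1.1.2.1.ne')).mul_left
  refine ⟨C * 4 ^ M, fun s t hs hst ht => ?_⟩
  have ht0 : 0 < t := hs.trans_le hst
  have hM : 0 < (4 * t) ^ M := by positivity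
  have := hC ⟨⟨⟨s, hs, hst.trans ht⟩, ⟨t, ht0, ht⟩⟩, hst⟩
  simp only [mul_assoc, quadratureError_const_mul] at this
  rwa [hK.quadratureError_cutoff_sub_mul hd hs.ne' ht0.ne', abs_mul, one_div, inv_pow,
    abs_of_pos (inv_pos.mpr hM), inv_mul_le_iff₀ hM, mul_comm, mul_pow, ← mul_assoc] at this

end IsHomogeneousKernel

/-- The regularised lattice error of a homogeneous kernel: the coefficients of the expansion of
`scaledError K φ` are these constants for the products of `K` with the Taylor terms of `φ`. -/
noncomputable def latticeConstant (K : (Fin n → ℝ) → ℝ) : ℝ :=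
  limUnder (𝓝[>] 0) (scaledError K (cutoff n))

namespace IsHomogeneousKernel

lemma tendsto_scaledError_cutoff (hK : IsHomogeneousKernel d K) (hd : -n < d) :
    Tendsto (scaledError K (cutoff n)) (𝓝[>] 0) (𝓝 (latticeConstant K)) := by
  refine tendsto_nhds_limUnder (cauchy_map_iff_exists_tendsto.mp (Metric.cauchy_iff.mpr
    ⟨inferInstance, fun ε hε => ?_⟩))
  obtain ⟨C, hC⟩ := hK.exists_abs_scaledError_cutoff_sub_le hd 1
  have hC' {s t δ : ℝ} (hs : 0 < s) (hst : s ≤ t) (ht : t < δ) (hδ : δ ≤ 1) :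
      |scaledError K (cutoff n) t - scaledError K (cutoff n) s| ≤ |C| * δ := by
    refine (hC s t hs hst (ht.le.trans hδ)).trans ?_
    rw [pow_one]
    gcongr
    exacts [hs.le.trans hst, le_abs_self C]
  set δ := min 1 (ε / (|C| + 1))
  have hδ0 : 0 < δ := by positivity
  have hδε : |C| * δ < ε := by
    have : δ * (|C| + 1) ≤ ε := (le_div_iff₀ (by positivity)).mp (min_le_right _ _)
    nlinarith
  refine ⟨_, image_mem_map (Ioo_mem_nhdsGT hδ0), ?_⟩
  rintro _ ⟨s, hs, rfl⟩ _ ⟨t, ht, rfl⟩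
  refine lt_of_le_of_lt ?_ hδε
  rcases le_total s t with hst | hts
  · rw [dist_comm]
    exact hC' hs.1 hst ht.2 (min_le_left _ _)
  · exact hC' ht.1 hts hs.2 (min_le_left _ _)

lemma exists_abs_scaledError_cutoff_sub_latticeConstant_le (hK : IsHomogeneousKernel d K)
    (hd : -n < d) (M : ℕ) :
    ∃ C, ∀ h ∈ Set.Ioc (0 : ℝ) 1,
      |scaledError K (cutoff n) h - latticeConstant K| ≤ C * h ^ M := by
  obtain ⟨C, hC⟩ := hK.exists_abs_scaledError_cutoff_sub_le hd M
  refine ⟨C, fun h hh => le_of_tendsto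
    ((tendsto_const_nhds.sub (hK.tendsto_scaledError_cutoff hd)).abs) ?_⟩
  filter_upwards [Ioc_mem_nhdsGT hh.1] with s hs using hC s h hs.1 hs.2 hh.2

end IsHomogeneousKernel

lemma latticeConstant_eq_zero_of_odd (hK : Function.Odd K) : latticeConstant K = 0 := by
  have hzero : scaledError K (cutoff n) = fun _ => 0 := funext fun h =>
    quadratureError_eq_zero_of_odd fun x => by
      rw [smul_neg, ContDiffBump.neg, hK, mul_neg]
  rw [latticeConstant, hzero]
  exact tendsto_const_nhds.limUnder_eq

end ScaledError

/-! ### Partial derivatives and Taylor terms -/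

section PartialDerivatives

open scoped ContDiff

variable {n : ℕ} {f : (Fin n → ℝ) → ℝ}

lemma contDiff_pd (hf : ContDiff ℝ ∞ f) (i : Fin n) : ContDiff ℝ ∞ (pd i f) :=
  (contDiff_infty_iff_fderiv.mp hf).2.clm_apply contDiff_const

lemma contDiff_pd_iterate (hf : ContDiff ℝ ∞ f) (i : Fin n) (m : ℕ) :
    ContDiff ℝ ∞ ((pd i)^[m] f) :=
  Function.Iterate.rec (fun f => ContDiff ℝ ∞ f) hf (fun _ h => contDiff_pd h i) m

lemma pd_comm (hf : ContDiff ℝ ∞ f) (i j : Fin n) : pd i (pd j f) = pd j (pd i f) := by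
  have happly (a b : Fin n) (x : Fin n → ℝ) :
      pd a (pd b f) x = fderiv ℝ (fderiv ℝ f) x (Pi.single a 1) (Pi.single b 1) := by
    have hdiff : DifferentiableAt ℝ (fderiv ℝ f) x :=
      (contDiff_infty_iff_fderiv.mp hf).2.differentiable (by simp) x
    change fderiv ℝ (fun y => fderiv ℝ f y (Pi.single b 1)) x (Pi.single a 1) = _
    rw [fderiv_clm_apply hdiff (differentiableAt_const _)]
    simp
  funext x
  rw [happly, happly]
  exact (contDiff_infty.mp hf 2).contDiffAt.isSymmSndFDerivAt (by simp) _ _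

lemma pd_iterate_pd (hf : ContDiff ℝ ∞ f) (i j : Fin n) (m : ℕ) :
    (pd j)^[m] (pd i f) = pd i ((pd j)^[m] f) := by
  induction m generalizing f with
  | zero => rfl
  | succ m ih => rw [Function.iterate_succ_apply, ← pd_comm hf, ih (contDiff_pd hf j),
      Function.iterate_succ_apply]

/-- The partial derivative of multi-index `γ` in the directions listed in `l`, so that `md` is the
case of all directions. -/
noncomputable def mdList (l : List (Fin n)) (γ : Fin n → ℕ) (f : (Fin n → ℝ) → ℝ) :
    (Fin n → ℝ) → ℝ :=
  l.foldr (fun j g => (pd j)^[γ j] g) f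

lemma contDiff_mdList (hf : ContDiff ℝ ∞ f) (l : List (Fin n)) (γ : Fin n → ℕ) :
    ContDiff ℝ ∞ (mdList l γ f) := by
  induction l with
  | nil => exact hf
  | cons j l ih => exact contDiff_pd_iterate ih j _

lemma mdList_pd (hf : ContDiff ℝ ∞ f) (l : List (Fin n)) (γ : Fin n → ℕ) (i : Fin n) :
    mdList l γ (pd i f) = pd i (mdList l γ f) := by
  induction l with
  | nil => rfl
  | cons j l ih =>
    change (pd j)^[γ j] (mdList l γ (pd i f)) = pd i ((pd j)^[γ j] (mdList l γ f))
    rw [ih, pd_iterate_pd (contDiff_mdList hf l γ)]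

lemma mdList_congr {l : List (Fin n)} {γ δ : Fin n → ℕ} (h : ∀ j ∈ l, γ j = δ j) :
    mdList l γ f = mdList l δ f :=
  List.foldr_ext _ _ _ fun j hj g => by rw [h j hj]

lemma mdList_add_single (hf : ContDiff ℝ ∞ f) {l : List (Fin n)} (hl : l.Nodup) (γ : Fin n → ℕ)
    {i : Fin n} (hi : i ∈ l) : mdList l (γ + Pi.single i 1) f = mdList l γ (pd i f) := by
  induction l with
  | nil => simp at hi
  | cons j l ih =>
    obtain ⟨hjl, hl⟩ := List.nodup_cons.mp hl
    change (pd j)^[(γ + Pi.single i 1 : Fin n → ℕ) j] (mdList l (γ + Pi.single i 1) f) =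
      (pd j)^[γ j] (mdList l γ (pd i f))
    rcases eq_or_ne j i with rfl | hji
    · have hrest : mdList l (γ + Pi.single j 1) f = mdList l γ f :=
        mdList_congr fun a ha => by simp [ne_of_mem_of_not_mem ha hjl]
      rw [hrest, mdList_pd hf, Pi.add_apply, Pi.single_eq_same, Function.iterate_succ_apply]
    · rw [ih hl (List.mem_of_ne_of_mem hji.symm hi)]
      simp [hji]

lemma md_add_single (hf : ContDiff ℝ ∞ f) (γ : Fin n → ℕ) (i : Fin n) :
    md (γ + Pi.single i 1) f = md γ (pd i f) :=
  mdList_add_single hf (List.nodup_finRange n) γ (List.mem_finRange i)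

lemma md_zero : md 0 f = f := by
  simp [md]

lemma iteratedFDeriv_apply_single (hf : ContDiff ℝ ∞ f) {q : ℕ} (v : Fin q → Fin n)
    (x : Fin n → ℝ) :
    iteratedFDeriv ℝ q f x (fun i => Pi.single (v i) 1) = md (∑ i, Pi.single (v i) 1) f x := by
  induction q generalizing f with
  | zero => simp [md_zero]
  | succ q ih =>
    rw [iteratedFDeriv_succ_apply_right, Fin.sum_univ_castSucc, md_add_single hf,
      ← ih (contDiff_pd hf _)]
    exact (iteratedFDeriv_clm_apply_const_apply (contDiff_infty_iff_fderiv.mp hf).2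
      (by exact_mod_cast le_top)).symm

lemma continuousMultilinearMap_ext_single {q : ℕ}
    {A B : ContinuousMultilinearMap ℝ (fun _ : Fin q => Fin n → ℝ) ℝ}
    (h : ∀ v : Fin q → Fin n,
      A (fun i => Pi.single (v i) 1) = B fun i => Pi.single (v i) 1) : A = B :=
  ContinuousMultilinearMap.toMultilinearMap_injective
    (Module.Basis.ext_multilinear (fun _ => Pi.basisFun ℝ (Fin n)) fun v => by simpa using h v)

lemma iteratedFDeriv_eq_zero_of_md {q : ℕ} {x : Fin n → ℝ} (hf : ContDiff ℝ ∞ f)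
    (hmd : ∀ γ : Fin n → ℕ, ∑ j, γ j = q → md γ f x = 0) : iteratedFDeriv ℝ q f x = 0 := by
  refine continuousMultilinearMap_ext_single fun v => ?_
  rw [iteratedFDeriv_apply_single hf, hmd _ ?_]
  · rfl
  · simp only [Finset.sum_apply]
    rw [Finset.sum_comm]
    simp

end PartialDerivatives

section Taylor

open Filter Topology
open scoped ContDiff

variable {n N : ℕ} {φ : (Fin n → ℝ) → ℝ}

/-- The homogeneous part of degree `q` of the Taylor expansion of `φ` at the origin. -/
noncomputable def taylorTerm {E : Type*} [NormedAddCommGroup E] [NormedSpace ℝ E] (φ : E → ℝ)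
    (q : ℕ) (x : E) : ℝ :=
  (q.factorial : ℝ)⁻¹ * iteratedFDeriv ℝ q φ 0 fun _ => x

section NormedSpace

variable {E : Type*} [NormedAddCommGroup E] [NormedSpace ℝ E] {φ : E → ℝ}

lemma contDiff_taylorTerm (q : ℕ) : ContDiff ℝ ∞ (taylorTerm φ q) :=
  contDiff_const.mul
    ((iteratedFDeriv ℝ q φ 0).contDiff.comp (contDiff_pi.mpr fun _ => contDiff_id))

lemma taylorTerm_smul (q : ℕ) (t : ℝ) (x : E) :
    taylorTerm φ q (t • x) = t ^ q * taylorTerm φ q x := by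
  have := (iteratedFDeriv ℝ q φ 0).map_smul_univ (fun _ => t) fun _ => x
  rw [taylorTerm, this]
  simp [taylorTerm, mul_left_comm]

lemma odd_taylorTerm {q : ℕ} (hq : Odd q) : Function.Odd (taylorTerm φ q) := fun x => by
  simpa [hq.neg_one_pow] using taylorTerm_smul (φ := φ) q (-1) x

lemma taylorTerm_eq_zero {q : ℕ} (hq : iteratedFDeriv ℝ q φ 0 = 0) : taylorTerm φ q = 0 := by
  funext x; simp [taylorTerm, hq]

lemma iteratedFDeriv_taylorTerm_of_ne {j q : ℕ} (hjq : j ≠ q) :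
    iteratedFDeriv ℝ j (taylorTerm φ q) 0 = 0 := by
  have hscale := pow_smul_iteratedFDeriv_of_eventuallyEq (k := j) (t := 2) (y := (0 : E))
    (contDiff_infty.mp (contDiff_taylorTerm (φ := φ) q) j)
    (.of_forall (taylorTerm_smul q 2))
  rw [smul_zero, ← sub_eq_zero, ← sub_smul, smul_eq_zero, sub_eq_zero] at hscale
  exact hscale.resolve_left ((pow_right_injective₀ two_pos (by norm_num)).ne hjq)

end NormedSpace

lemma iteratedFDeriv_taylorTerm_self (hφ : ContDiff ℝ ∞ φ) (q : ℕ) :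
    iteratedFDeriv ℝ q (taylorTerm φ q) 0 = iteratedFDeriv ℝ q φ 0 := by
  refine continuousMultilinearMap_ext_single fun v => ?_
  have hperm (σ : Equiv.Perm (Fin q)) :
      iteratedFDeriv ℝ q φ 0 (fun i => Pi.single (v (σ i)) 1) =
        iteratedFDeriv ℝ q φ 0 fun i => Pi.single (v i) 1 := by
    rw [iteratedFDeriv_apply_single hφ v, iteratedFDeriv_apply_single hφ fun i => v (σ i),
      Equiv.sum_comp σ fun i => (Pi.single (v i) 1 : Fin n → ℕ)]
  change iteratedFDeriv ℝ q
    ((q.factorial : ℝ)⁻¹ • fun x => iteratedFDeriv ℝ q φ 0 fun _ => x) 0 _ = _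
  rw [iteratedFDeriv_const_smul_apply]
  · rw [smul_apply, ContinuousMultilinearMap.iteratedFDeriv_comp_diagonal]
    simp only [hperm, Finset.sum_const, Finset.card_univ, Fintype.card_perm, Fintype.card_fin]
    rw [nsmul_eq_mul, smul_eq_mul, inv_mul_cancel_left₀ (by exact_mod_cast q.factorial_ne_zero)]
  · exact ((iteratedFDeriv ℝ q φ 0).contDiff.comp
      (contDiff_pi.mpr fun _ => contDiff_id)).contDiffAt

/-- The remainder of the Taylor expansion of `φ` at the origin, with the Taylor polynomial cut off
so that compact support is preserved. -/
noncomputable def taylorRemainder (φ : (Fin n → ℝ) → ℝ) (N : ℕ) (x : Fin n → ℝ) : ℝ :=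
  φ x - cutoff n x * ∑ q ∈ Finset.range N, taylorTerm φ q x

lemma contDiff_taylorRemainder (hφ : ContDiff ℝ ∞ φ) (N : ℕ) :
    ContDiff ℝ ∞ (taylorRemainder φ N) :=
  hφ.sub ((cutoff n).contDiff.mul (ContDiff.sum fun q _ => contDiff_taylorTerm q))

lemma hasCompactSupport_taylorRemainder (hc : HasCompactSupport φ) (N : ℕ) :
    HasCompactSupport (taylorRemainder φ N) :=
  hc.sub (cutoff n).hasCompactSupport.mul_right

lemma iteratedFDeriv_taylorRemainder (hφ : ContDiff ℝ ∞ φ) {j : ℕ} (hj : j < N) :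
    iteratedFDeriv ℝ j (taylorRemainder φ N) 0 = 0 := by
  have hnear : taylorRemainder φ N =ᶠ[𝓝 0]
      fun x => φ x - ∑ q ∈ Finset.range N, taylorTerm φ q x := by
    filter_upwards [(cutoff n).eventuallyEq_one] with x hx
    simp [taylorRemainder, hx]
  have hsmooth (q : ℕ) : ContDiff ℝ j (taylorTerm φ q) :=
    contDiff_infty.mp (contDiff_taylorTerm q) j
  rw [(hnear.iteratedFDeriv ℝ j).eq_of_nhds, fun_iteratedFDeriv_sub_apply
    (contDiff_infty.mp hφ j).contDiffAt (ContDiff.sum fun q _ => hsmooth q).contDiffAt,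
    iteratedFDeriv_fun_sum_apply fun q _ => (hsmooth q).contDiffAt,
    Finset.sum_eq_single_of_mem j (Finset.mem_range.mpr hj)
      fun q _ hq => iteratedFDeriv_taylorTerm_of_ne hq.symm,
    iteratedFDeriv_taylorTerm_self hφ, sub_self]

end Taylor

/-! ### The expansion of the scaled error -/

section Expansion

open Filter Topology
open scoped ContDiff

variable {n p : ℕ} {d : ℝ} {K φ : (Fin n → ℝ) → ℝ}

/-- The coefficient of `h ^ q` in the asymptotic expansion of `scaledError K φ h`. -/
noncomputable def errorCoeff (K φ : (Fin n → ℝ) → ℝ) (q : ℕ) : ℝ :=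
  latticeConstant fun x => K x * taylorTerm φ q x

lemma errorCoeff_eq_zero_of_odd (hK : Function.Even K) {q : ℕ} (hq : Odd q) :
    errorCoeff K φ q = 0 :=
  latticeConstant_eq_zero_of_odd (hK.mul_odd (odd_taylorTerm hq))

lemma errorCoeff_eq_zero_of_iteratedFDeriv {q : ℕ} (hq : iteratedFDeriv ℝ q φ 0 = 0) :
    errorCoeff K φ q = 0 :=
  latticeConstant_eq_zero_of_odd fun x => by simp [taylorTerm_eq_zero hq]

lemma scaledError_mul_taylorTerm (ψ : (Fin n → ℝ) → ℝ) (q : ℕ) (h : ℝ) :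
    scaledError K (fun x => ψ x * taylorTerm φ q x) h =
      h ^ q * scaledError (fun x => K x * taylorTerm φ q x) ψ h := by
  rw [scaledError, scaledError, ← quadratureError_const_mul]
  congr 1 with x
  rw [taylorTerm_smul]
  ring

namespace IsHomogeneousKernel

lemma mul_taylorTerm (hK : IsHomogeneousKernel d K) (q : ℕ) :
    IsHomogeneousKernel (d + q) fun x => K x * taylorTerm φ q x :=
  hK.mul_homogeneous (contDiff_taylorTerm q) (taylorTerm_smul q)

lemma scaledError_eq_sum_add_remainder (hK : IsHomogeneousKernel d K) (hd : -n < d)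
    (hφ : ContDiff ℝ ∞ φ) (hc : HasCompactSupport φ) (N : ℕ) {h : ℝ} (hh : h ≠ 0) :
    scaledError K φ h =
      (∑ q ∈ Finset.range N,
        h ^ q * scaledError (fun x => K x * taylorTerm φ q x) (cutoff n) h) +
      scaledError K (taylorRemainder φ N) h := by
  have hterm (q : ℕ) : LatticeIntegrable fun x =>
      cutoff n (h • x) * taylorTerm φ q (h • x) * K x :=
    hK.latticeIntegrable_comp_smul_mul hd
      ((cutoff n).continuous.mul (contDiff_taylorTerm (φ := φ) q).continuous)
      (cutoff n).hasCompactSupport.mul_right hh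
  have hrest := hK.latticeIntegrable_comp_smul_mul hd
    (contDiff_taylorRemainder hφ N).continuous (hasCompactSupport_taylorRemainder hc N) hh
  simp only [← scaledError_mul_taylorTerm]
  simp only [scaledError]
  rw [← quadratureError_sum fun q _ => hterm q, ← quadratureError_add ?_ hrest]
  · congr 1 with x
    rw [taylorRemainder, ← Finset.sum_mul, ← Finset.mul_sum]
    ring
  · exact ⟨integrable_finsetSum _ fun q _ => (hterm q).1, summable_sum fun q _ => (hterm q).2⟩

theorem exists_abs_scaledError_sub_sum_le (hK : IsHomogeneousKernel d K) (hd : -n < d)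
    (hφ : ContDiff ℝ ∞ φ) (hc : HasCompactSupport φ) (N : ℕ) :
    ∃ C, ∀ h ∈ Set.Ioc (0 : ℝ) 1,
      |scaledError K φ h - ∑ q ∈ Finset.range N, errorCoeff K φ q * h ^ q| ≤ C * h ^ N := by
  obtain ⟨A, hA⟩ := hK.exists_abs_scaledError_le_of_vanishing hd (contDiff_taylorRemainder hφ N)
    (hasCompactSupport_taylorRemainder hc N) fun j => iteratedFDeriv_taylorRemainder hφ
  have hdq (q : ℕ) : -n < d + q := by linarith [q.cast_nonneg (α := ℝ)]
  choose B hB using fun q => (hK.mul_taylorTerm (φ := φ) q)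
    |>.exists_abs_scaledError_cutoff_sub_latticeConstant_le (hdq q) N
  refine ⟨(∑ q ∈ Finset.range N, B q) + A, fun h hh => ?_⟩
  rw [hK.scaledError_eq_sum_add_remainder hd hφ hc N hh.1.ne', add_sub_right_comm,
    ← Finset.sum_sub_distrib, add_mul, Finset.sum_mul]
  refine (abs_add_le _ _).trans (add_le_add ?_ (hA h hh))
  refine (Finset.abs_sum_le_sum_abs _ _).trans (Finset.sum_le_sum fun q _ => ?_)
  rw [mul_comm _ (h ^ q), ← mul_sub, abs_mul, abs_of_nonneg (pow_nonneg hh.1.le q)]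
  exact (mul_le_of_le_one_left (abs_nonneg _) (pow_le_one₀ hh.1.le hh.2)).trans (hB q h hh)

lemma tendsto_scaledError (hK : IsHomogeneousKernel d K) (hd : -n < d) (hφ : ContDiff ℝ ∞ φ)
    (hc : HasCompactSupport φ) :
    Tendsto (scaledError K φ) (𝓝[>] 0) (𝓝 (errorCoeff K φ 0)) := by
  obtain ⟨C, hC⟩ := hK.exists_abs_scaledError_sub_sum_le hd hφ hc 1
  rw [tendsto_iff_norm_sub_tendsto_zero]
  have hlim : Tendsto (fun h => C * h) (𝓝[>] 0) (𝓝 0) :=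
    tendsto_nhdsWithin_of_tendsto_nhds (Continuous.tendsto' (by fun_prop) _ _ (mul_zero C))
  refine squeeze_zero' (.of_forall fun _ => norm_nonneg _) ?_ hlim
  filter_upwards [Ioc_mem_nhdsGT zero_lt_one] with h hh
  simpa using hC h hh

end IsHomogeneousKernel

lemma sum_range_two_mul_of_odd_eq_zero {M : Type*} [AddCommMonoid M] {a : ℕ → M}
    (ha : ∀ q, Odd q → a q = 0) (m : ℕ) :
    ∑ q ∈ Finset.range (2 * m), a q = ∑ i ∈ Finset.range m, a (2 * i) := by
  induction m with
  | zero => rfl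
  | succ m ih =>
    rw [mul_add, mul_one, Finset.sum_range_succ, Finset.sum_range_succ, ih,
      ha _ (odd_two_mul_add_one m), add_zero, Finset.sum_range_succ]

lemma sum_range_errorCoeff_of_even (hK : Function.Even K)
    (hflat : ∀ q, 1 ≤ q → q ≤ 2 * p + 1 → iteratedFDeriv ℝ q φ 0 = 0) (k : ℕ) (h : ℝ) :
    ∑ q ∈ Finset.range (2 * p + 4 + 2 * k), errorCoeff K φ q * h ^ q =
      errorCoeff K φ 0 + h ^ (2 * p + 2) * ∑ j ∈ Finset.range (k + 1),
        errorCoeff K φ (2 * (p + 1 + j)) * h ^ (2 * j) := by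
  have hlow : ∀ i ∈ Finset.range (p + 1), i ≠ 0 → errorCoeff K φ (2 * i) * h ^ (2 * i) = 0 :=
    fun i hi hi0 => by
      have := Finset.mem_range.mp hi
      rw [errorCoeff_eq_zero_of_iteratedFDeriv (hflat _ (by omega) (by omega)), zero_mul]
  rw [show 2 * p + 4 + 2 * k = 2 * (p + 1 + (k + 1)) by ring, sum_range_two_mul_of_odd_eq_zero
    fun q hq => by rw [errorCoeff_eq_zero_of_odd hK hq, zero_mul], Finset.sum_range_add,
    Finset.sum_eq_single_of_mem 0 (by simp) hlow, Finset.mul_sum]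
  congr 1
  · simp
  · exact Finset.sum_congr rfl fun j _ => by ring

end Expansion

/-! ### The trapezoidal rule for the moment kernels -/

section Moments

open Filter Topology
open scoped ContDiff

variable {n : ℕ} {d α : ℝ}

lemma trap_eq_pow_mul_tsum {f : (Fin n → ℝ) → ℝ} (hf : f 0 = 0) (h : ℝ) :
    trap h f = h ^ n * ∑' β : Fin n → ℤ, f (h • latticePoint β) := by
  have hpoint (β : Fin n → ℤ) : (fun j => (β j : ℝ) * h) = h • latticePoint β := by
    funext j; simp [latticePoint, mul_comm]
  simp only [trap, hpoint]
  exact congrArg _ (tsum_subtype_eq_of_support_subset (s := {β | β ≠ 0})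
    (f := fun β => f (h • latticePoint β)) fun β hβ h0 => hβ (by simp [h0, hf]))

lemma IsHomogeneousKernel.scaledError_eq {K : (Fin n → ℝ) → ℝ} (hK : IsHomogeneousKernel d K)
    (φ : (Fin n → ℝ) → ℝ) {h : ℝ} (hh : 0 < h) :
    scaledError K φ h =
      h ^ (-(d + n)) * ((∫ x, φ x * K x) - trap h fun x => φ x * K x) := by
  have hint : ∫ x, φ x * K x = h ^ n * ∫ x, φ (h • x) * K (h • x) := by
    rw [Measure.integral_comp_smul volume (fun x => φ x * K x), Module.finrank_fin_fun,
      abs_of_pos (by positivity), smul_eq_mul, mul_inv_cancel_left₀ (by positivity)]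
  rw [hint, trap_eq_pow_mul_tsum (by rw [hK.map_zero, mul_zero]), ← mul_sub, ← mul_assoc]
  simp only [hK.map_smul h hh, mul_left_comm _ (h ^ d), integral_const_mul, tsum_mul_left]
  rw [← mul_sub, ← mul_assoc, mul_assoc (h ^ (-(d + n))), ← rpow_natCast, ← rpow_add hh,
    ← rpow_add hh, neg_add_eq_zero.mpr (add_comm _ _), rpow_zero, one_mul]
  rfl

lemma euclNorm_nonneg (x : Fin n → ℝ) : 0 ≤ euclNorm x := Real.sqrt_nonneg _

lemma euclNorm_smul {t : ℝ} (ht : 0 ≤ t) (x : Fin n → ℝ) :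
    euclNorm (t • x) = t * euclNorm x := by
  simp only [euclNorm, Pi.smul_apply, smul_eq_mul, mul_pow]
  rw [← Finset.mul_sum, Real.sqrt_mul (sq_nonneg t), Real.sqrt_sq ht]

lemma euclNorm_neg (x : Fin n → ℝ) : euclNorm (-x) = euclNorm x := by
  simp [euclNorm]

lemma sum_sq_pos {x : Fin n → ℝ} (hx : x ≠ 0) : 0 < ∑ j, x j ^ 2 := by
  obtain ⟨j, hj⟩ := Function.ne_iff.mp hx
  exact Finset.sum_pos' (fun _ _ => sq_nonneg _) ⟨j, Finset.mem_univ j, sq_pos_of_ne_zero hj⟩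

lemma contDiffAt_euclNorm {x : Fin n → ℝ} (hx : x ≠ 0) : ContDiffAt ℝ ∞ euclNorm x :=
  ContDiffAt.sqrt (by fun_prop) (sum_sq_pos hx).ne'

lemma isHomogeneousKernel_sOn (α : ℝ) : IsHomogeneousKernel (-α) (sOn α) where
  contDiffAt x hx := by
    have hpos : 0 < euclNorm x := Real.sqrt_pos.mpr (sum_sq_pos hx)
    exact ContDiffAt.div (by fun_prop) ((contDiffAt_euclNorm hx).rpow_const_of_ne hpos.ne')
      (rpow_pos_of_pos hpos _).ne'
  map_smul t ht x := by
    have hpow : t ^ (-α) = t ^ 2 / t ^ (2 + α) := by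
      rw [← rpow_natCast, ← rpow_sub ht]
      norm_num
    simp only [sOn, Pi.smul_apply, smul_eq_mul]
    rw [euclNorm_smul ht.le, mul_rpow ht.le (euclNorm_nonneg x), mul_pow, hpow, mul_div_mul_comm]
  map_zero := by simp [sOn]

/-- The kernel `s(x) x ^ (2ξ)` of the moment of index `ξ`. -/
noncomputable def momentKernel (α : ℝ) (ξ : ℕ × ℕ) (x : Fin 2 → ℝ) : ℝ :=
  sOn α x * (x 0 ^ (2 * ξ.1) * x 1 ^ (2 * ξ.2))

lemma isHomogeneousKernel_momentKernel (α : ℝ) (ξ : ℕ × ℕ) :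
    IsHomogeneousKernel (-α + (2 * ξ.1 + 2 * ξ.2 : ℕ)) (momentKernel α ξ) :=
  (isHomogeneousKernel_sOn α).mul_homogeneous (by fun_prop) fun t x => by
    simp only [Pi.smul_apply, smul_eq_mul]
    ring

lemma even_momentKernel (α : ℝ) (ξ : ℕ × ℕ) : Function.Even (momentKernel α ξ) := fun x => by
  simp [momentKernel, sOn, euclNorm_neg, pow_mul]

lemma scaledError_momentKernel (α : ℝ) (ξ : ℕ × ℕ) (g : (Fin 2 → ℝ) → ℝ) {h : ℝ} (hh : 0 < h) :
    scaledError (momentKernel α ξ) g h = h ^ (-(2 * ((ξ.1 : ℝ) + (ξ.2 : ℝ)) + 2 - α)) *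
      ((∫ x : Fin 2 → ℝ, g x * sOn α x * x 0 ^ (2 * ξ.1) * x 1 ^ (2 * ξ.2)) -
        trap h fun x => g x * sOn α x * x 0 ^ (2 * ξ.1) * x 1 ^ (2 * ξ.2)) := by
  have hexponent : -(2 * ((ξ.1 : ℝ) + (ξ.2 : ℝ)) + 2 - α) =
      -(-α + (2 * ξ.1 + 2 * ξ.2 : ℕ) + (2 : ℕ)) := by
    push_cast; ring
  rw [(isHomogeneousKernel_momentKernel α ξ).scaledError_eq g hh, hexponent]
  simp only [momentKernel, mul_assoc]

lemma sqrt_sum_sq_le_sum {ι : Type*} [Fintype ι] {a b : ι → ℝ} (hab : ∀ i, |a i| ≤ b i) :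
    √(∑ i, a i ^ 2) ≤ ∑ i, b i := by
  have hb (i) : 0 ≤ b i := (abs_nonneg _).trans (hab i)
  refine Real.sqrt_le_iff.mpr ⟨Finset.sum_nonneg fun i _ => hb i, ?_⟩
  exact (Finset.sum_le_sum fun i _ => sq_le_sq.mpr ((hab i).trans (le_abs_self _))).trans
    (Finset.sum_sq_le_sq_sum_of_nonneg fun i _ => hb i)

theorem on_diagonal_rhs_expansion_general {ι : Type*} [Fintype ι]
    (p k : ℕ) (α : ℝ) (hα2 : α < 2)
    (g : (Fin 2 → ℝ) → ℝ) (hg : ContDiff ℝ (⊤ : ℕ∞) g) (hgc : HasCompactSupport g)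
    (hgd : ∀ l : Fin 2 → ℕ, 1 ≤ ∑ j, l j → ∑ j, l j ≤ 2 * p + 1 → md l g 0 = 0)
    (ξ : ι → ℕ × ℕ) (c : ℝ → ι → ℝ)
    (hc : ∀ h : ℝ, 0 < h → ∀ i, c h i =
      h ^ (-(2 * (((ξ i).1 : ℝ) + ((ξ i).2 : ℝ)) + 2 - α)) *
        ((∫ x : Fin 2 → ℝ, g x * sOn α x * x 0 ^ (2 * (ξ i).1) * x 1 ^ (2 * (ξ i).2)) -
          trap h fun x => g x * sOn α x * x 0 ^ (2 * (ξ i).1) * x 1 ^ (2 * (ξ i).2)))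
    (cc : ι → ℝ) (hcc : Tendsto c (𝓝[>] 0) (𝓝 cc)) :
    ∃ Cv : Fin (k + 1) → ι → ℝ, ∃ C > (0 : ℝ), ∃ h₀ > (0 : ℝ),
      ∀ h : ℝ, 0 < h → h < h₀ →
        Real.sqrt (∑ i, (c h i - cc i -
            h ^ (2 * p + 2) * ∑ j : Fin (k + 1), Cv j i * h ^ (2 * (j : ℕ))) ^ 2) ≤
          C * h ^ (2 * p + 4 + 2 * k) := by
  let K (i : ι) := momentKernel α (ξ i)
  have hK (i) := isHomogeneousKernel_momentKernel α (ξ i)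
  have hd (i) : -((2 : ℕ) : ℝ) < -α + (2 * (ξ i).1 + 2 * (ξ i).2 : ℕ) := by push_cast; linarith
  have hcK (i) {h : ℝ} (hh : 0 < h) : c h i = scaledError (K i) g h :=
    (hc h hh i).trans (scaledError_momentKernel α (ξ i) g hh).symm
  have hlim (i) : cc i = errorCoeff (K i) g 0 :=
    tendsto_nhds_unique_of_eventuallyEq (tendsto_pi_nhds.mp hcc i)
      ((hK i).tendsto_scaledError (hd i) hg hgc)
      (eventually_mem_nhdsWithin.mono fun _ hh => hcK i hh)
  have hflat (q : ℕ) (h1 : 1 ≤ q) (h2 : q ≤ 2 * p + 1) : iteratedFDeriv ℝ q g 0 = 0 :=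
    iteratedFDeriv_eq_zero_of_md hg fun γ hγ => hgd γ (hγ ▸ h1) (hγ ▸ h2)
  choose C hC using fun i =>
    (hK i).exists_abs_scaledError_sub_sum_le (hd i) hg hgc (2 * p + 4 + 2 * k)
  refine ⟨fun j i => errorCoeff (K i) g (2 * (p + 1 + j)), ∑ i, |C i| + 1, by positivity, 1,
    one_pos, fun h hh h1 => (sqrt_sum_sq_le_sum
      (b := fun i => |C i| * h ^ (2 * p + 4 + 2 * k)) fun i => ?_).trans ?_⟩
  · have hsum := sum_range_errorCoeff_of_even (even_momentKernel α (ξ i)) hflat k h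
    rw [hcK i hh, hlim, sub_sub, Fin.sum_univ_eq_sum_range
      (fun j => errorCoeff (K i) g (2 * (p + 1 + j)) * h ^ (2 * j)), ← hsum]
    exact (hC i h ⟨hh, h1.le⟩).trans (by gcongr; exact le_abs_self _)
  · rw [← Finset.sum_mul]
    gcongr
    exact le_add_of_nonneg_right zero_le_one

end Moments

/-- asymptotic expansion in even powers of `h` of the right-hand side vector
`c(h)` of the on-diagonal moment linear system. -/
theorem on_diagonal_rhs_expansion
    (p k : ℕ) (α : ℝ) (hα0 : 0 < α) (hα2 : α < 2)
    (g : (Fin 2 → ℝ) → ℝ) (hg : ContDiff ℝ (⊤ : ℕ∞) g) (hgc : HasCompactSupport g)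
    (hg0 : g 0 = 1)
    (hgd : ∀ l : Fin 2 → ℕ, 1 ≤ ∑ j, l j → ∑ j, l j ≤ 2 * p + 1 → md l g 0 = 0)
    (Np : ℕ) (hNp : Np = (p + 1) * (p + 2) / 2)
    (ξ : Fin Np → ℕ × ℕ) (hξinj : Function.Injective ξ)
    (hξmem : ∀ i, (ξ i).1 + (ξ i).2 ≤ p)
    (hξsurj : ∀ γ : ℕ × ℕ, γ.1 + γ.2 ≤ p → ∃ i, ξ i = γ)
    (c : ℝ → Fin Np → ℝ)
    (hc : ∀ h : ℝ, 0 < h → ∀ i, c h i =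
      h ^ (-(2 * (((ξ i).1 : ℝ) + ((ξ i).2 : ℝ)) + 2 - α)) *
        ((∫ x : Fin 2 → ℝ, g x * sOn α x * x 0 ^ (2 * (ξ i).1) * x 1 ^ (2 * (ξ i).2)) -
          trap h fun x => g x * sOn α x * x 0 ^ (2 * (ξ i).1) * x 1 ^ (2 * (ξ i).2)))
    (cc : Fin Np → ℝ)
    (hcc : Filter.Tendsto c (nhdsWithin 0 (Set.Ioi 0)) (nhds cc)) :
    ∃ Cv : Fin (k + 1) → Fin Np → ℝ, ∃ C > (0:ℝ), ∃ h₀ > (0:ℝ),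
      ∀ h : ℝ, 0 < h → h < h₀ →
        Real.sqrt (∑ i, (c h i - cc i -
            h ^ (2 * p + 2) * ∑ j : Fin (k + 1), Cv j i * h ^ (2 * (j : ℕ))) ^ 2) ≤
          C * h ^ (2 * p + 4 + 2 * k) := by
  exact on_diagonal_rhs_expansion_general p k α hα2 g hg hgc hgd ξ c hc cc hcc
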